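/- Suppose f_n ≥ 0, ∑_{n≥1} f_n = 1, and ∑_{j>n} f_j = C n^{-β}(1+o(1)) for some C > 0 and β ∈ (0,1). Then as θ → 0⁺, 1 - ∑_{n≥1} f_n e^{i n θ} = C_β θ^β (1 + o(1)) for a constant C_β depending only on C and β (with C_β = C Γ(1-β) e^{-iπβ/2} up to normalization). -/

import Mathlib

open Filter Asymptotics

noncomputable def tl (f : ℕ → ℝ) (y : ℝ) : ℝ := ∑' j : ℕ, if y < (j : ℝ) then f j else 0

lemma tl_summable {f : ℕ → ℝ} (hf : ∀ n, 0 ≤ f n) (hs : Summable f) (y : ℝ) :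
    Summable (fun j : ℕ => if y < (j : ℝ) then f j else 0) := by
  refine Summable.of_nonneg_of_le (fun j => ?_) (fun j => ?_) hs
  · split_ifs
    · exact hf j
    · exact le_rfl
  · split_ifs
    · exact le_rfl
    · exact hf j

lemma tl_nonneg {f : ℕ → ℝ} (hf : ∀ n, 0 ≤ f n) (y : ℝ) : 0 ≤ tl f y := by
  refine tsum_nonneg (fun j => ?_)
  split_ifs
  · exact hf j
  · exact le_rfl

lemma tl_le {f : ℕ → ℝ} (hf : ∀ n, 0 ≤ f n) (hs : Summable f) (y : ℝ) :
    tl f y ≤ ∑' n, f n := by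
  refine Summable.tsum_le_tsum (fun j => ?_) (tl_summable hf hs y) hs
  split_ifs
  · exact le_rfl
  · exact hf j

lemma tl_antitone {f : ℕ → ℝ} (hf : ∀ n, 0 ≤ f n) (hs : Summable f) : Antitone (tl f) := by
  intro x y hxy
  refine Summable.tsum_le_tsum (fun j => ?_) (tl_summable hf hs y) (tl_summable hf hs x)
  by_cases h : y < (j : ℝ)
  · rw [if_pos h, if_pos (hxy.trans_lt h)]
  · rw [if_neg h]
    split_ifs
    · exact hf j
    · exact le_rfl

lemma tl_tendsto {f : ℕ → ℝ} {C β : ℝ} (hC : 0 < C)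
    (h : (fun n : ℕ => ∑' j : ℕ, if n < j then f j else 0) ~[atTop]
          fun n : ℕ => C * (n : ℝ) ^ (-β)) :
    Tendsto (fun y => tl f y * y ^ β) atTop (nhds C) := by
  have h1 : Tendsto (fun n : ℕ => (∑' j : ℕ, if n < j then f j else 0) * (n : ℝ) ^ β) atTop
      (nhds C) := by
    have hne : ∀ᶠ n : ℕ in atTop, C * (n : ℝ) ^ (-β) ≠ 0 := by
      filter_upwards [eventually_gt_atTop 0] with n hn
      have : (0 : ℝ) < n := by exact_mod_cast hn
      positivity
    have h2 := ((isEquivalent_iff_tendsto_one hne).1 h).mul_const C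
    rw [one_mul] at h2
    refine h2.congr' ?_
    filter_upwards [eventually_gt_atTop 0] with n hn
    have : (0 : ℝ) < n := by exact_mod_cast hn
    simp only [Pi.div_apply]
    rw [Real.rpow_neg this.le]
    have := Real.rpow_pos_of_pos this β
    field_simp
  have h3 := h1.comp (tendsto_nat_floor_atTop (α := ℝ))
  have h4 : Tendsto (fun y : ℝ => ((⌊y⌋₊ : ℝ) / y) ^ (-β)) atTop (nhds 1) := by
    have := (tendsto_nat_floor_div_atTop (R := ℝ)).rpow_const (p := -β) (Or.inl one_ne_zero)
    simpa using this
  have h5 := h3.mul h4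
  rw [mul_one] at h5
  refine h5.congr' ?_
  filter_upwards [eventually_ge_atTop 1] with y hy
  have hy0 : 0 < y := by linarith
  have hf : (0 : ℝ) < (⌊y⌋₊ : ℝ) := by
    exact_mod_cast Nat.floor_pos.2 hy
  have e : tl f y = ∑' j : ℕ, if ⌊y⌋₊ < j then f j else 0 := by
    unfold tl
    congr 1
    ext j
    simp only [Nat.floor_lt hy0.le]
  simp only [Function.comp]
  rw [e, Real.div_rpow hf.le hy0.le, Real.rpow_neg hf.le, Real.rpow_neg hy0.le]
  have := Real.rpow_pos_of_pos hf β
  have := Real.rpow_pos_of_pos hy0 β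
  field_simp

lemma tl_bound {f : ℕ → ℝ} {C β : ℝ} (hC : 0 < C) (hβ : 0 < β) (hf : ∀ n, 0 ≤ f n)
    (hs : Summable f) (h1 : ∑' n, f n = 1)
    (h : Tendsto (fun y => tl f y * y ^ β) atTop (nhds C)) :
    ∃ K, 0 < K ∧ ∀ y, 0 < y → tl f y ≤ K * y ^ (-β) := by
  obtain ⟨Y, hY⟩ := eventually_atTop.1 (h.eventually (eventually_le_nhds (lt_add_one C)))
  refine ⟨C + 1 + |Y| ^ β, by positivity, fun y hy => ?_⟩
  have hp := Real.rpow_pos_of_pos hy β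
  rw [Real.rpow_neg hy.le, ← div_eq_mul_inv, le_div_iff₀ hp]
  have hq : 0 ≤ |Y| ^ β := by positivity
  rcases le_total Y y with hyy | hyy
  · linarith [hY y hyy]
  · have : y ^ β ≤ |Y| ^ β := Real.rpow_le_rpow hy.le (hyy.trans (le_abs_self Y)) hβ.le
    have h2 := tl_le hf hs y
    rw [h1] at h2
    nlinarith [tl_nonneg hf y]

noncomputable def gg (x : ℝ) : ℂ := 1 - Complex.exp (x * Complex.I)
noncomputable def gd (x : ℝ) : ℂ := - (Complex.exp (x * Complex.I) * Complex.I)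

lemma gg_deriv (x : ℝ) : HasDerivAt gg (gd x) x := by
  have h : HasDerivAt (fun x : ℝ => (x : ℂ) * Complex.I) Complex.I x := by
    simpa using (Complex.ofRealCLM.hasDerivAt (x := x)).mul_const Complex.I
  exact h.cexp.const_sub 1

lemma gd_cont : Continuous gd := by unfold gd; fun_prop
lemma gg_cont : Continuous gg := by unfold gg; fun_prop

lemma gd_norm (x : ℝ) : ‖gd x‖ = 1 := by
  simp [gd, Complex.norm_exp_ofReal_mul_I]

lemma gg_zero : gg 0 = 0 := by simp [gg]

lemma gg_norm_two (x : ℝ) : ‖gg x‖ ≤ 2 := by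
  unfold gg
  refine (norm_sub_le _ _).trans ?_
  rw [Complex.norm_exp_ofReal_mul_I]; norm_num

lemma gg_int (a b : ℝ) : ∫ x in a..b, gd x = gg b - gg a :=
  intervalIntegral.integral_eq_sub_of_hasDerivAt (fun x _ => gg_deriv x)
    (gd_cont.intervalIntegrable _ _)

lemma gg_norm (x : ℝ) (hx : 0 ≤ x) : ‖gg x‖ ≤ x := by
  have h := intervalIntegral.norm_integral_le_of_norm_le_const (a := 0) (b := x) (f := gd) (C := 1)
    (fun y _ => (gd_norm y).le)
  rw [gg_int, gg_zero] at h
  simpa [abs_of_nonneg hx] using h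

lemma gg_min {A t : ℝ} (hA : 0 ≤ A) (ht : 0 ≤ t) :
    ∫ x in (0:ℝ)..A, (if x < t then gd x else 0) = gg (min t A) := by
  have hm : 0 ≤ min t A := le_min ht hA
  have : ∫ x in (0:ℝ)..A, (if x < t then gd x else 0) = ∫ x in (0:ℝ)..(min t A), gd x := by
    rw [intervalIntegral.integral_of_le hA, intervalIntegral.integral_of_le hm,
      MeasureTheory.integral_Ioc_eq_integral_Ioo (y := min t A),
      MeasureTheory.integral_Ioc_eq_integral_Ioo]
    have e : (fun x => if x < t then gd x else 0) = Set.indicator (Set.Iio t) gd := by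
      ext x; simp [Set.indicator]
    rw [e, MeasureTheory.setIntegral_indicator measurableSet_Iio]
    congr 2
    ext x; simp; tauto
  rw [this, gg_int, gg_zero, sub_zero]

lemma main_ident {f : ℕ → ℝ} (hf : ∀ n, 0 ≤ f n) (hs : Summable f) {A θ : ℝ} (hA : 0 ≤ A)
    (hθ : 0 < θ) :
    HasSum (fun n : ℕ => (f n : ℂ) * gg (min (n * θ) A))
      (∫ x in (0:ℝ)..A, gd x * (tl f (x / θ) : ℂ)) := by
  have h := intervalIntegral.hasSum_integral_of_dominated_convergence (a := 0) (b := A)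
    (μ := MeasureTheory.volume)
    (F := fun (n : ℕ) x => (f n : ℂ) * (if x < n * θ then gd x else 0))
    (f := fun x => gd x * (tl f (x / θ) : ℂ)) (fun n _ => f n) ?_ ?_ ?_ ?_ ?_
  · have e : (fun n : ℕ => (f n : ℂ) * gg (min (n * θ) A)) = fun n : ℕ =>
        ∫ x in (0:ℝ)..A, (f n : ℂ) * (if x < n * θ then gd x else 0) := by
      ext n
      rw [intervalIntegral.integral_const_mul, gg_min hA (by positivity)]
    rw [e]
    exact h
  · intro n
    refine (Measurable.const_mul ?_ _).aestronglyMeasurable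
    exact Measurable.ite measurableSet_Iio gd_cont.measurable measurable_const
  · intro n
    refine Eventually.of_forall fun x _ => ?_
    rw [norm_mul, Complex.norm_real, Real.norm_of_nonneg (hf n)]
    have : ‖(if x < n * θ then gd x else 0)‖ ≤ 1 := by
      split_ifs
      · exact (gd_norm x).le
      · simp
    nlinarith [hf n]
  · exact Eventually.of_forall fun x _ => hs
  · exact intervalIntegrable_const
  · refine Eventually.of_forall fun x _ => ?_
    have := ((tl_summable hf hs (x / θ)).hasSum.mapL Complex.ofRealCLM).mul_left (gd x)
    have e : (fun n : ℕ => (f n : ℂ) * (if x < n * θ then gd x else 0)) = fun n : ℕ =>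
        gd x * Complex.ofRealCLM (if x / θ < (n : ℝ) then f n else 0) := by
      ext1 n
      by_cases hx : x < n * θ
      · rw [if_pos hx, if_pos ((div_lt_iff₀ hθ).2 hx)]; simp [mul_comm]
      · rw [if_neg hx, if_neg (fun h => hx ((div_lt_iff₀ hθ).1 h))]; simp
    rw [e]
    exact this

lemma main_err {f : ℕ → ℝ} (hf : ∀ n, 0 ≤ f n) (hs : Summable f) (h1 : ∑' n, f n = 1)
    {A θ : ℝ} (hA : 0 ≤ A) (hθ : 0 < θ) :
    ‖(1 - ∑' n : ℕ, (f n : ℂ) * Complex.exp ((n : ℂ) * (θ : ℂ) * Complex.I))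
      - ∫ x in (0:ℝ)..A, gd x * (tl f (x / θ) : ℂ)‖ ≤ 4 * tl f (A / θ) := by
  have hsC : HasSum (fun n => (f n : ℂ)) 1 := by
    have := hs.hasSum.mapL Complex.ofRealCLM
    rw [h1] at this
    simpa using this
  have he : Summable (fun n : ℕ => (f n : ℂ) * Complex.exp ((n : ℂ) * (θ : ℂ) * Complex.I)) := by
    refine Summable.of_norm_bounded hs (fun n => ?_)
    have : (n : ℂ) * (θ : ℂ) = ((n * θ : ℝ) : ℂ) := by push_cast; rfl
    rw [norm_mul, this, Complex.norm_exp_ofReal_mul_I, Complex.norm_real,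
      Real.norm_of_nonneg (hf n), mul_one]
  have hd := (hsC.sub he.hasSum).sub (main_ident hf hs hA hθ)
  have ht := (tl_summable hf hs (A / θ)).hasSum.mul_left 4
  refine hd.norm_le_of_bounded ht (fun n => ?_)
  have : (f n : ℂ) - (f n : ℂ) * Complex.exp ((n : ℂ) * (θ : ℂ) * Complex.I)
      - (f n : ℂ) * gg (min (n * θ) A) = (f n : ℂ) * (gg (n * θ) - gg (min (n * θ) A)) := by
    simp only [gg]; push_cast; ring
  rw [this, norm_mul, Complex.norm_real, Real.norm_of_nonneg (hf n)]
  simp only [div_lt_iff₀ hθ]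
  split_ifs with hlt
  · have := (norm_sub_le (gg (n * θ)) (gg (min (n * θ) A))).trans
      (add_le_add (gg_norm_two _) (gg_norm_two _))
    nlinarith [hf n]
  · rw [min_eq_left (not_lt.1 hlt)]; simp

lemma main_lim {f : ℕ → ℝ} {C β K : ℝ} (hβ : β ∈ Set.Ioo (0 : ℝ) 1) (hf : ∀ n, 0 ≤ f n)
    (hs : Summable f)
    (h : Tendsto (fun y => tl f y * y ^ β) atTop (nhds C))
    (hK : ∀ y, 0 < y → tl f y ≤ K * y ^ (-β)) {A : ℝ} (hA : 0 ≤ A) :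
    Tendsto (fun θ : ℝ => ∫ x in (0:ℝ)..A, gd x * ((tl f (x / θ) * θ ^ (-β) : ℝ) : ℂ))
      (nhdsWithin 0 (Set.Ioi 0))
      (nhds (∫ x in (0:ℝ)..A, gd x * ((C * x ^ (-β) : ℝ) : ℂ))) := by
  refine intervalIntegral.tendsto_integral_filter_of_dominated_convergence
    (fun x => K * x ^ (-β)) ?_ ?_ ?_ ?_
  · filter_upwards [self_mem_nhdsWithin] with θ hθ
    have hθ : 0 < θ := hθ
    refine (gd_cont.measurable.mul (Complex.measurable_ofReal.comp
      (Measurable.mul_const ?_ _))).aestronglyMeasurable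
    exact (tl_antitone hf hs).measurable.comp (measurable_id.div_const θ)
  · filter_upwards [self_mem_nhdsWithin] with θ hθ
    have hθ : 0 < θ := hθ
    refine Eventually.of_forall fun x hx => ?_
    rw [Set.uIoc_of_le hA] at hx
    have hp := Real.rpow_pos_of_pos hθ (-β)
    rw [norm_mul, gd_norm, one_mul, Complex.norm_real,
      Real.norm_of_nonneg (mul_nonneg (tl_nonneg hf _) hp.le)]
    have := mul_le_mul_of_nonneg_right (hK (x / θ) (div_pos hx.1 hθ)) hp.le
    rwa [Real.div_rpow hx.1.le hθ.le, mul_assoc, div_mul_cancel₀ _ hp.ne'] at this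
  · exact (intervalIntegral.intervalIntegrable_rpow' (by linarith [hβ.2])).const_mul K
  · refine Eventually.of_forall fun x hx => ?_
    rw [Set.uIoc_of_le hA] at hx
    have ha : Tendsto (fun θ : ℝ => x / θ) (nhdsWithin 0 (Set.Ioi 0)) atTop := by
      simpa [div_eq_mul_inv] using tendsto_inv_nhdsGT_zero.const_mul_atTop hx.1
    have h2 := (h.comp ha).mul_const (x ^ (-β))
    have h3 := ((Complex.continuous_ofReal.tendsto _).comp h2).const_mul (gd x)
    refine h3.congr' ?_
    filter_upwards [self_mem_nhdsWithin] with θ hθ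
    have hθ : 0 < θ := hθ
    simp only [Function.comp]
    rw [Real.div_rpow hx.1.le hθ.le, Real.rpow_neg hx.1.le, Real.rpow_neg hθ.le]
    have := Real.rpow_pos_of_pos hθ β
    have := Real.rpow_pos_of_pos hx.1 β
    congr 2
    field_simp

lemma gw_integrable {β : ℝ} (hβ : β ∈ Set.Ioo (0 : ℝ) 1) :
    MeasureTheory.IntegrableOn (fun x : ℝ => gg x * ((x ^ (-β - 1) : ℝ) : ℂ)) (Set.Ioi 0) := by
  have hm : Measurable (fun x : ℝ => gg x * ((x ^ (-β - 1) : ℝ) : ℂ)) :=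
    gg_cont.measurable.mul (Complex.measurable_ofReal.comp (by fun_prop))
  rw [← Set.Ioc_union_Ioi_eq_Ioi (zero_le_one (α := ℝ))]
  refine MeasureTheory.IntegrableOn.union ?_ ?_
  · have hi := (intervalIntegral.intervalIntegrable_rpow' (a := 0) (b := 1) (r := -β)
      (by linarith [hβ.2]))
    rw [intervalIntegrable_iff_integrableOn_Ioc_of_le zero_le_one] at hi
    refine MeasureTheory.Integrable.mono' hi hm.aestronglyMeasurable ?_
    refine (MeasureTheory.ae_restrict_iff' measurableSet_Ioc).2 (Eventually.of_forall fun x hx => ?_)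
    have hp := Real.rpow_pos_of_pos hx.1 (-β - 1)
    rw [norm_mul, Complex.norm_real, Real.norm_of_nonneg hp.le]
    have := mul_le_mul_of_nonneg_right (gg_norm x hx.1.le) hp.le
    refine this.trans_eq ?_
    rw [Real.rpow_sub_one hx.1.ne']
    have := hx.1.ne'
    field_simp
  · have hi := (integrableOn_Ioi_rpow_of_lt (a := -β - 1) (by linarith [hβ.1]) one_pos).const_mul 2
    refine MeasureTheory.Integrable.mono' hi hm.aestronglyMeasurable ?_
    refine (MeasureTheory.ae_restrict_iff' measurableSet_Ioi).2 (Eventually.of_forall fun x hx => ?_)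
    have hp := Real.rpow_pos_of_pos (one_pos.trans hx) (-β - 1)
    rw [norm_mul, Complex.norm_real, Real.norm_of_nonneg hp.le]
    exact mul_le_mul_of_nonneg_right (gg_norm_two x) hp.le

noncomputable def LL (β : ℝ) : ℂ := β * ∫ x in Set.Ioi (0:ℝ), gg x * ((x ^ (-β - 1) : ℝ) : ℂ)

lemma LL_ne {β : ℝ} (hβ : β ∈ Set.Ioo (0 : ℝ) 1) : LL β ≠ 0 := by
  have hi := gw_integrable hβ
  intro h0
  rw [LL, mul_eq_zero] at h0
  rcases h0 with h0 | h0
  · exact hβ.1.ne' (by exact_mod_cast h0)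
  have hre : ∫ x in Set.Ioi (0:ℝ), (1 - Real.cos x) * x ^ (-β - 1) = 0 := by
    have := integral_re hi
    rw [h0] at this
    simpa [gg, Complex.exp_ofReal_mul_I_re] using this
  have hir : MeasureTheory.IntegrableOn (fun x : ℝ => (1 - Real.cos x) * x ^ (-β - 1))
      (Set.Ioi 0) := by
    have := hi.re
    simp [gg, Complex.exp_ofReal_mul_I_re] at this
    exact this
  have hpos : 0 < ∫ x in Set.Ioi (0:ℝ), (1 - Real.cos x) * x ^ (-β - 1) := by
    rw [MeasureTheory.setIntegral_pos_iff_support_of_nonneg_ae _ hir]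
    · refine lt_of_lt_of_le ?_ (MeasureTheory.measure_mono (s := Set.Ioo 0 1) ?_)
      · simp
      · intro x hx
        refine ⟨?_, hx.1⟩
        have hc : Real.cos x < 1 := by
          have := Real.cos_lt_cos_of_nonneg_of_le_pi_div_two le_rfl
            (by linarith [hx.2, Real.pi_gt_three]) hx.1
          simpa using this
        have := Real.rpow_pos_of_pos hx.1 (-β - 1)
        simp only [Function.mem_support]
        exact (mul_pos (by linarith) this).ne'
    · refine (MeasureTheory.ae_restrict_iff' measurableSet_Ioi).2
        (Eventually.of_forall fun x hx => ?_)
      have := Real.rpow_pos_of_pos hx (-β - 1)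
      exact mul_nonneg (by linarith [Real.cos_le_one x]) this.le
  exact hpos.ne' hre

lemma ibp {β : ℝ} (hβ : β ∈ Set.Ioo (0 : ℝ) 1) {A : ℝ} (hA : 0 < A) :
    ∫ x in (0:ℝ)..A, gd x * ((x ^ (-β) : ℝ) : ℂ) =
      gg A * ((A ^ (-β) : ℝ) : ℂ) +
        β * ∫ x in (0:ℝ)..A, gg x * ((x ^ (-β - 1) : ℝ) : ℂ) := by
  have hi1 : IntervalIntegrable (fun x : ℝ => gd x * ((x ^ (-β) : ℝ) : ℂ))
      MeasureTheory.volume 0 A := by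
    have h0 : IntervalIntegrable (fun x : ℝ => x ^ (-β)) MeasureTheory.volume 0 A :=
      intervalIntegral.intervalIntegrable_rpow' (by linarith [hβ.2])
    have : IntervalIntegrable (fun x : ℝ => ((x ^ (-β) : ℝ) : ℂ)) MeasureTheory.volume 0 A :=
      ⟨h0.1.ofReal, h0.2.ofReal⟩
    exact this.continuousOn_mul gd_cont.continuousOn
  have hi2 : IntervalIntegrable (fun x : ℝ => gg x * ((x ^ (-β - 1) : ℝ) : ℂ))
      MeasureTheory.volume 0 A := by
    rw [intervalIntegrable_iff_integrableOn_Ioc_of_le hA.le]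
    exact (gw_integrable hβ).mono_set Set.Ioc_subset_Ioi_self
  have hc : ContinuousOn (fun x : ℝ => gg x * ((x ^ (-β) : ℝ) : ℂ)) (Set.Icc 0 A) := by
    intro x hx
    rcases hx.1.eq_or_lt with h0 | h0
    · subst h0
      have : Tendsto (fun x : ℝ => gg x * ((x ^ (-β) : ℝ) : ℂ)) (nhdsWithin 0 (Set.Icc 0 A))
          (nhds 0) := by
        refine squeeze_zero_norm' (a := fun x : ℝ => x ^ (1 - β)) ?_ ?_
        · filter_upwards [self_mem_nhdsWithin] with y hy
          rcases hy.1.eq_or_lt with h0 | h0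
          · subst h0
            simp [gg_zero]
            positivity
          · have hp := Real.rpow_pos_of_pos h0 (-β)
            rw [norm_mul, Complex.norm_real, Real.norm_of_nonneg hp.le]
            have := mul_le_mul_of_nonneg_right (gg_norm y hy.1) hp.le
            rwa [← Real.rpow_one_add' hy.1 (by linarith [hβ.2])] at this
        · have := (Real.continuousAt_rpow_const 0 (1 - β) (Or.inr (by linarith [hβ.2]))).tendsto
          rw [Real.zero_rpow (by linarith [hβ.2])] at this
          exact this.mono_left nhdsWithin_le_nhds
      simpa [ContinuousWithinAt, gg_zero] using this
    · refine ContinuousAt.continuousWithinAt ?_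
      exact gg_cont.continuousAt.mul (Complex.continuous_ofReal.continuousAt.comp
        (Real.continuousAt_rpow_const x (-β) (Or.inl h0.ne')))
  have hd : ∀ x ∈ Set.Ioo 0 A, HasDerivAt (fun x : ℝ => gg x * ((x ^ (-β) : ℝ) : ℂ))
      (gd x * ((x ^ (-β) : ℝ) : ℂ) - β * (gg x * ((x ^ (-β - 1) : ℝ) : ℂ))) x := by
    intro x hx
    have h1 := (Real.hasDerivAt_rpow_const (x := x) (p := -β) (Or.inl hx.1.ne')).ofReal_comp
    have h2 := (gg_deriv x).mul h1
    refine h2.congr_deriv ?_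
    push_cast; ring
  have := intervalIntegral.integral_eq_sub_of_hasDerivAt_of_le hA.le hc hd
    (hi1.sub (hi2.const_mul _))
  rw [intervalIntegral.integral_sub hi1 (hi2.const_mul _), intervalIntegral.integral_const_mul,
    gg_zero, zero_mul, sub_zero] at this
  rw [← this]; ring

lemma LA_err {β : ℝ} (hβ : β ∈ Set.Ioo (0 : ℝ) 1) {A : ℝ} (hA : 0 < A) :
    ‖(∫ x in (0:ℝ)..A, gd x * ((x ^ (-β) : ℝ) : ℂ)) - LL β‖ ≤ 4 * A ^ (-β) := by
  have hi := gw_integrable hβ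
  have hsplit := intervalIntegral.integral_interval_add_Ioi (a := 0) (b := A) hi
    (hi.mono_set (Set.Ioi_subset_Ioi hA.le))
  rw [ibp hβ hA, LL, ← hsplit]
  have hp := Real.rpow_pos_of_pos hA (-β)
  have e : ∀ a b c : ℂ, a + β * b - β * (b + c) = a - β * c := by intros; ring
  rw [e]
  have h1 : ‖gg A * ((A ^ (-β) : ℝ) : ℂ)‖ ≤ 2 * A ^ (-β) := by
    rw [norm_mul, Complex.norm_real, Real.norm_of_nonneg hp.le]
    exact mul_le_mul_of_nonneg_right (gg_norm_two A) hp.le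
  have h2 : ‖∫ x in Set.Ioi A, gg x * ((x ^ (-β - 1) : ℝ) : ℂ)‖ ≤ 2 * (A ^ (-β) / β) := by
    have hb : ∫ x in Set.Ioi A, 2 * x ^ (-β - 1) = 2 * (A ^ (-β) / β) := by
      rw [MeasureTheory.integral_const_mul, integral_Ioi_rpow_of_lt (by linarith [hβ.1]) hA]
      simp [neg_div_neg_eq]
    rw [← hb]
    refine MeasureTheory.norm_integral_le_of_norm_le
      ((integrableOn_Ioi_rpow_of_lt (by linarith [hβ.1]) hA).const_mul 2) ?_
    refine (MeasureTheory.ae_restrict_iff' measurableSet_Ioi).2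
        (Eventually.of_forall fun x hx => ?_)
    have hp := Real.rpow_pos_of_pos (hA.trans hx) (-β - 1)
    rw [norm_mul, Complex.norm_real, Real.norm_of_nonneg hp.le]
    exact mul_le_mul_of_nonneg_right (gg_norm_two x) hp.le
  have h3 : ‖(β : ℂ) * ∫ x in Set.Ioi A, gg x * ((x ^ (-β - 1) : ℝ) : ℂ)‖ ≤ 2 * A ^ (-β) := by
    rw [norm_mul, Complex.norm_real, Real.norm_of_nonneg hβ.1.le]
    refine (mul_le_mul_of_nonneg_left h2 hβ.1.le).trans_eq ?_
    have := hβ.1.ne'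
    field_simp
  linarith [norm_sub_le (gg A * ((A ^ (-β) : ℝ) : ℂ))
    ((β : ℂ) * ∫ x in Set.Ioi A, gg x * ((x ^ (-β - 1) : ℝ) : ℂ))]

theorem characteristic_function_stable_asymptotics
    (C β : ℝ) (hC : 0 < C) (hβ : β ∈ Set.Ioo (0 : ℝ) 1) :
    ∃ Cβ : ℂ, Cβ ≠ 0 ∧
      ∀ f : ℕ → ℝ, (∀ n, 0 ≤ f n) → f 0 = 0 → (∑' n, f n) = 1 →
        ((fun n : ℕ => ∑' j : ℕ, if n < j then f j else 0) ~[atTop]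
          fun n : ℕ => C * (n : ℝ) ^ (-β)) →
        ((fun θ : ℝ =>
            1 - ∑' n : ℕ, (f n : ℂ) * Complex.exp ((n : ℂ) * (θ : ℂ) * Complex.I))
          ~[nhdsWithin 0 (Set.Ioi 0)] fun θ : ℝ => Cβ * (θ : ℂ) ^ (β : ℂ)) := by
  have hL0 : (C : ℂ) * LL β ≠ 0 := mul_ne_zero (by exact_mod_cast hC.ne') (LL_ne hβ)
  refine ⟨C * LL β, hL0, fun f hf _ h1 hT => ?_⟩
  have hs : Summable f := by
    by_contra hns
    rw [tsum_eq_zero_of_not_summable hns] at h1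
    exact zero_ne_one h1
  have ht := tl_tendsto hC hT
  obtain ⟨K, hK0, hK⟩ := tl_bound hC hβ.1 hf hs h1 ht
  have key : Tendsto (fun θ : ℝ =>
      (1 - ∑' n : ℕ, (f n : ℂ) * Complex.exp ((n : ℂ) * (θ : ℂ) * Complex.I))
        * ((θ ^ (-β) : ℝ) : ℂ)) (nhdsWithin 0 (Set.Ioi 0)) (nhds (C * LL β)) := by
    rw [Metric.tendsto_nhds]
    intro ε hε
    have hA : ∃ A : ℝ, 0 < A ∧ 4 * (K + C) * A ^ (-β) < ε / 2 := by
      have h0 := (tendsto_rpow_neg_atTop hβ.1).const_mul (4 * (K + C))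
      rw [mul_zero] at h0
      obtain ⟨A, h2, h3⟩ := ((eventually_gt_atTop 0).and
        (h0.eventually (gt_mem_nhds (half_pos hε)))).exists
      exact ⟨A, h2, h3⟩
    obtain ⟨A, hA, hAε⟩ := hA
    have hl := Metric.tendsto_nhds.1 (main_lim hβ hf hs ht hK hA.le) (ε / 2) (half_pos hε)
    filter_upwards [hl, self_mem_nhdsWithin] with θ hθl hθ
    have hθ : 0 < θ := hθ
    have hp := Real.rpow_pos_of_pos hθ (-β)
    rw [dist_eq_norm] at hθl ⊢
    have e1 : ∫ x in (0:ℝ)..A, gd x * ((tl f (x / θ) * θ ^ (-β) : ℝ) : ℂ)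
        = (∫ x in (0:ℝ)..A, gd x * (tl f (x / θ) : ℂ)) * ((θ ^ (-β) : ℝ) : ℂ) := by
      rw [← intervalIntegral.integral_mul_const]
      congr 1; ext x; push_cast; ring
    have e2 : ∫ x in (0:ℝ)..A, gd x * ((C * x ^ (-β) : ℝ) : ℂ)
        = C * ∫ x in (0:ℝ)..A, gd x * ((x ^ (-β) : ℝ) : ℂ) := by
      rw [← intervalIntegral.integral_const_mul]
      congr 1; ext x; push_cast; ring
    rw [e1, e2] at hθl
    have b1 := main_err hf hs h1 hA.le hθ
    have b2 := LA_err hβ hA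
    have b3 := hK (A / θ) (div_pos hA hθ)
    generalize (1 - ∑' n : ℕ, (f n : ℂ) * Complex.exp ((n : ℂ) * (θ : ℂ) * Complex.I)) = P at *
    generalize (∫ x in (0:ℝ)..A, gd x * (tl f (x / θ) : ℂ)) = Q at *
    generalize (∫ x in (0:ℝ)..A, gd x * ((x ^ (-β) : ℝ) : ℂ)) = R at *
    have c1 : ‖(P - Q) * ((θ ^ (-β) : ℝ) : ℂ)‖ ≤ 4 * K * A ^ (-β) := by
      rw [norm_mul, Complex.norm_real, Real.norm_of_nonneg hp.le]
      have := mul_le_mul_of_nonneg_right (b1.trans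
        (mul_le_mul_of_nonneg_left b3 (by norm_num : (0:ℝ) ≤ 4))) hp.le
      refine this.trans_eq ?_
      rw [Real.div_rpow hA.le hθ.le]
      field_simp
    have c2 : ‖(C : ℂ) * (R - LL β)‖ ≤ 4 * C * A ^ (-β) := by
      rw [norm_mul, Complex.norm_real, Real.norm_of_nonneg hC.le]
      nlinarith
    have e3 : P * ((θ ^ (-β) : ℝ) : ℂ) - C * LL β = (P - Q) * ((θ ^ (-β) : ℝ) : ℂ)
        + (Q * ((θ ^ (-β) : ℝ) : ℂ) - C * R) + C * (R - LL β) := by ring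
    rw [e3]
    refine (norm_add₃_le).trans_lt ?_
    linarith
  have hne : ∀ᶠ θ : ℝ in nhdsWithin 0 (Set.Ioi 0), C * LL β * (θ : ℂ) ^ (β : ℂ) ≠ 0 := by
    filter_upwards [self_mem_nhdsWithin] with θ hθ
    have hθ : 0 < θ := hθ
    refine mul_ne_zero hL0 ?_
    rw [← Complex.ofReal_cpow hθ.le]
    exact_mod_cast (Real.rpow_pos_of_pos hθ β).ne'
  rw [isEquivalent_iff_tendsto_one hne]
  have k2 := key.div_const (C * LL β)
  rw [div_self hL0] at k2
  refine k2.congr' ?_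
  filter_upwards [self_mem_nhdsWithin] with θ hθ
  have hθ : 0 < θ := hθ
  simp only [Pi.div_apply]
  generalize (1 - ∑' n : ℕ, (f n : ℂ) * Complex.exp ((n : ℂ) * (θ : ℂ) * Complex.I)) = P
  rw [← Complex.ofReal_cpow hθ.le, Real.rpow_neg hθ.le]
  push_cast
  rw [div_eq_div_iff hL0]
  · have : ((θ ^ β : ℝ) : ℂ) ≠ 0 := by exact_mod_cast (Real.rpow_pos_of_pos hθ β).ne'
    field_simp
  · refine mul_ne_zero hL0 ?_
    exact_mod_cast (Real.rpow_pos_of_pos hθ β).ne'
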